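/- Let p and q be coprime integers with q > 0 and p ≠ −q, and let σ ∈ PGL₂(ℚ) be given by σ(z) = (qz + p)/((p + 2q)z − q) (an involution fixing 1). Then for every algebraic number α with α ≠ 1, h(α) + h(σ(α)) ≥ log max(|p + 3q|/4, |p − q|/4). Moreover, if 4 divides p − q, then equality holds for α = −1. -/

import Mathlib

/- For a nonzero `f ∈ ℤ[X]`, the Mahler measure `M(f) = |a_n| ∏ max(|α_i|,1)`. -/
open Polynomial

noncomputable def mahlerMeasure (f : ℤ[X]) : ℝ :=
  |(f.leadingCoeff : ℝ)| *
    (((f.map (Int.castRingHom ℂ)).roots).map (fun z => max ‖z‖ 1)).prod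

/-- The primitive minimal polynomial over `ℤ` of an algebraic number. -/
noncomputable def intMinpoly (α : ℂ) : ℤ[X] :=
  (IsLocalization.integerNormalization (nonZeroDivisors ℤ) (minpoly ℚ α)).primPart

/-- The absolute logarithmic Weil height `h(α) = (1/n) log M(f)`. -/
noncomputable def height (α : ℂ) : ℝ :=
  Real.log (mahlerMeasure (intMinpoly α)) / (minpoly ℚ α).natDegree

/-!
Let `γ = σ(α)` with `σ = (a b; c d)`, let `f` be the primitive minimal polynomial of `γ` and `n` its
degree. The numerator `G` of `f ∘ σ` is then its content times the primitive minimal polynomial of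
`α`, so `M(G) = cont(G) M(α)`. Fix an integer `t` such that, at each place, the distance from
`z` to `t` is controlled by the sizes of `z` and of `σ⁻¹(z)`. Since norms of polynomials are
multiplicative, multiplying these local bounds over the roots `z` of `f` gives
`κ ^ n f(t) ^ 2 ≤ M(f) M(G)` at the archimedean place and `cont(G) ∣ f(t) ^ 2` at the finite places.
As `f(t) ≠ 0`, dividing one by the other leaves `κ ^ n ≤ M(γ) M(α)`, which is the height bound
`log κ ≤ h(α) + h(γ)`. In the case at hand `t = 1` is the fixed point of `σ`.
-/

lemma dvd_of_forall_padic_norm_le {m n : ℤ}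
    (h : ∀ (l : ℕ) [Fact l.Prime], ‖(m : ℚ_[l])‖ ≤ ‖(n : ℚ_[l])‖) : n ∣ m := by
  rw [← Int.natAbs_dvd_natAbs, Nat.dvd_iff_prime_pow_dvd_dvd]
  intro l k hl hk
  have : Fact l.Prime := ⟨hl⟩
  rw [← Int.natCast_dvd, Nat.cast_pow, ← Padic.norm_int_le_pow_iff_dvd] at hk ⊢
  exact (h l).trans hk

section MoebiusTransform

variable {R : Type*}

/-- The numerator `∏ ((a - c z) X + (b - d z))` (over the roots `z` of `f`, times the leading
coefficient) of `f ((a X + b) / (c X + d))`, obtained by substituting `(a X + b, c X + d)` into the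
homogenization of `f` of degree `f.natDegree`. Its roots are the preimages of those of `f` under
`x ↦ (a x + b) / (c x + d)`. -/
noncomputable def moebiusTransform [CommSemiring R] (a b c d : R) (f : R[X]) : R[X] :=
  MvPolynomial.aeval ![C a * X + C b, C c * X + C d] (f.homogenize f.natDegree)

lemma moebiusTransform_C [CommSemiring R] (a b c d r : R) :
    moebiusTransform a b c d (C r) = C r := by
  simp [moebiusTransform]

lemma moebiusTransform_X_add_C [CommSemiring R] [Nontrivial R] (a b c d r : R) :
    moebiusTransform a b c d (X + C r) = C (a + c * r) * X + C (b + d * r) := by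
  simp only [moebiusTransform, natDegree_X_add_C, homogenize_add, homogenize_X one_ne_zero,
    homogenize_C, map_add, map_mul, map_pow, MvPolynomial.aeval_X, MvPolynomial.aeval_C,
    Matrix.cons_val_zero, Matrix.cons_val_one, algebraMap_eq, map_add, map_mul]
  ring

lemma moebiusTransform_mul [CommSemiring R] [NoZeroDivisors R] (a b c d : R) (f g : R[X]) :
    moebiusTransform a b c d (f * g) =
      moebiusTransform a b c d f * moebiusTransform a b c d g := by
  by_cases hf : f = 0
  · simp [moebiusTransform, hf]
  by_cases hg : g = 0
  · simp [moebiusTransform, hg]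
  rw [moebiusTransform, natDegree_mul hf hg, homogenize_mul f g le_rfl le_rfl, map_mul]
  rfl

lemma moebiusTransform_map {S : Type*} [CommSemiring R] [CommSemiring S] {φ : R →+* S}
    (hφ : Function.Injective φ) (a b c d : R) (f : R[X]) :
    (moebiusTransform a b c d f).map φ = moebiusTransform (φ a) (φ b) (φ c) (φ d) (f.map φ) := by
  rw [moebiusTransform, moebiusTransform, natDegree_map_eq_of_injective hφ, homogenize_map,
    MvPolynomial.aeval_def, MvPolynomial.aeval_def, ← coe_mapRingHom, MvPolynomial.hom_eval₂,
    MvPolynomial.eval₂_map]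
  congr 1
  · ext; simp
  · ext i : 1; fin_cases i <;> simp

lemma natDegree_moebiusTransform_le [CommSemiring R] (a b c d : R) (f : R[X]) :
    (moebiusTransform a b c d f).natDegree ≤ f.natDegree := by
  refine (MvPolynomial.aeval_natDegree_le _ (isHomogeneous_homogenize f).totalDegree_le _
    (n := 1) fun i => ?_).trans_eq (mul_one _)
  fin_cases i <;> exact natDegree_linear_le

lemma eval_moebiusTransform [Semifield R] (a b c d : R) (f : R[X]) {x : R} (hx : c * x + d ≠ 0) :
    (moebiusTransform a b c d f).eval x =
      f.eval ((a * x + b) / (c * x + d)) * (c * x + d) ^ f.natDegree := by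
  have hcomp : (evalRingHom x).comp (algebraMap R R[X]) = RingHom.id R := by ext; simp
  have hsubst : evalRingHom x ∘ ![C a * X + C b, C c * X + C d] = ![a * x + b, c * x + d] := by
    ext i; fin_cases i <;> simp
  rw [← coe_evalRingHom, moebiusTransform, MvPolynomial.aeval_def, MvPolynomial.hom_eval₂, hcomp]
  exact (congrArg (fun v => MvPolynomial.eval v (f.homogenize f.natDegree)) hsubst).trans
    (eval_homogenize f.natDegree.le_refl ![a * x + b, c * x + d] hx)

end MoebiusTransform

section LocalBound

/-- At a place with norm `‖·‖`, the displacement of `z` from the point `t` is controlled by the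
size of `z` and the size of its image `(d z - b) / (a - c z)` under the inverse of
`x ↦ (a x + b) / (c x + d)`, with loss at most `κ`. -/
def MoebiusLocalBound {K : Type*} [NormedField K] (κ : ℝ) (a b c d t : K) : Prop :=
  ∀ z : K, κ * ‖t - z‖ ^ 2 ≤ max 1 ‖z‖ * max ‖a - c * z‖ ‖b - d * z‖

variable {K : Type*} [NormedField K] {κ : ℝ} {a b c d t : K}

/- Both sides are multiplicative in `F`, so it suffices to treat constants and linear factors; on
`X - z` the claim is the local bound at `z`. -/
lemma MoebiusLocalBound.pow_mul_norm_eval_sq_le (h : MoebiusLocalBound κ a b c d t) (hκ : 0 ≤ κ)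
    {N : K[X] → ℝ} (hN_mul : ∀ f g, N (f * g) = N f * N g)
    (hN_linear : ∀ x y, max ‖x‖ ‖y‖ ≤ N (C x * X + C y)) {F : K[X]} (hF : F.Splits) :
    κ ^ F.natDegree * ‖F.eval t‖ ^ 2 ≤ N F * N (moebiusTransform a b c d F) := by
  have hN_C (x : K) : ‖x‖ ≤ N (C x) := by simpa using hN_linear 0 x
  have const (x : K) :
      κ ^ (C x).natDegree * ‖(C x).eval t‖ ^ 2 ≤ N (C x) * N (moebiusTransform a b c d (C x)) := by
    simp only [moebiusTransform_C, natDegree_C, eval_C, pow_zero, one_mul, sq]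
    exact mul_self_le_mul_self (norm_nonneg x) (hN_C x)
  induction hF using Submonoid.closure_induction with
  | mem F hF =>
    obtain ⟨x, rfl⟩ | ⟨x, rfl⟩ := hF
    · exact const x
    · have hX : max 1 ‖x‖ ≤ N (X + C x) := by simpa using hN_linear 1 x
      have hx := h (-x)
      simp only [mul_neg, sub_neg_eq_add, norm_neg] at hx
      simp only [moebiusTransform_X_add_C, natDegree_X_add_C, pow_one, eval_add, eval_X, eval_C]
      exact hx.trans (mul_le_mul hX (hN_linear _ _) (by positivity) (le_trans (by positivity) hX))
  | one => exact const 1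
  | mul F G _ _ ihF ihG =>
    rcases eq_or_ne (F * G) 0 with hFG | hFG
    · have h0 : 0 ≤ N 0 := by simpa using hN_C 0
      simpa [hFG, moebiusTransform] using mul_nonneg h0 h0
    · rw [natDegree_mul (left_ne_zero_of_mul hFG) (right_ne_zero_of_mul hFG), eval_mul, norm_mul,
        moebiusTransform_mul, hN_mul, hN_mul]
      calc κ ^ (F.natDegree + G.natDegree) * (‖F.eval t‖ * ‖G.eval t‖) ^ 2
          = κ ^ F.natDegree * ‖F.eval t‖ ^ 2 * (κ ^ G.natDegree * ‖G.eval t‖ ^ 2) := by ring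
        _ ≤ N F * N (moebiusTransform a b c d F) * (N G * N (moebiusTransform a b c d G)) :=
          mul_le_mul ihF ihG (by positivity) (le_trans (by positivity) ihF)
        _ = N F * N G * (N (moebiusTransform a b c d F) * N (moebiusTransform a b c d G)) := by
          ring

lemma supNorm_mul_of_isUltrametricDist [IsUltrametricDist K] (f g : K[X]) :
    (f * g).supNorm = f.supNorm * g.supNorm :=
  gaussNorm_mul (v := NormedField.toAbsoluteValue K) IsUltrametricDist.isNonarchimedean_norm
    one_pos f g

lemma max_norm_le_supNorm_linear (x y : K) : max ‖x‖ ‖y‖ ≤ (C x * X + C y).supNorm :=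
  max_le ((by simp [coeff_C] : ‖x‖ = ‖(C x * X + C y).coeff 1‖).trans_le (le_supNorm _ 1))
    ((by simp : ‖y‖ = ‖(C x * X + C y).coeff 0‖).trans_le (le_supNorm _ 0))

lemma supNorm_map_intCast_le_norm_content [IsUltrametricDist K] (f : ℤ[X]) :
    (f.map (Int.castRingHom K)).supNorm ≤ ‖(f.content : K)‖ := by
  obtain ⟨i, hi⟩ := (f.map (Int.castRingHom K)).exists_eq_supNorm
  obtain ⟨m, hm⟩ := f.content_dvd_coeff i
  rw [hi, coeff_map, hm, eq_intCast, Int.cast_mul, norm_mul]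
  exact mul_le_of_le_one_right (norm_nonneg _) (IsUltrametricDist.norm_intCast_le_one K m)

lemma mahlerMeasure_linear (x y : ℂ) : (C x * X + C y).mahlerMeasure = max ‖x‖ ‖y‖ := by
  rcases eq_or_ne x 0 with rfl | hx
  · simp
  · exact Polynomial.mahlerMeasure_C_mul_X_add_C hx y

lemma mahlerMeasure_eq_mahlerMeasure_map (f : ℤ[X]) :
    _root_.mahlerMeasure f = (f.map (Int.castRingHom ℂ)).mahlerMeasure := by
  rw [Polynomial.mahlerMeasure_eq_leadingCoeff_mul_prod_roots, _root_.mahlerMeasure,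
    leadingCoeff_map_of_injective (RingHom.injective_int (Int.castRingHom ℂ))]
  simp [max_comm]

namespace MoebiusLocalBound

variable {a b c d t : ℤ}

lemma pow_mul_sq_eval_le {κ : ℝ} (h : MoebiusLocalBound κ (a : ℂ) b c d t) (hκ : 0 ≤ κ)
    (f : ℤ[X]) :
    κ ^ f.natDegree * ((f.eval t : ℤ) : ℝ) ^ 2 ≤
      _root_.mahlerMeasure f * _root_.mahlerMeasure (moebiusTransform a b c d f) := by
  have hinj := RingHom.injective_int (Int.castRingHom ℂ)
  have key := h.pow_mul_norm_eval_sq_le hκ Polynomial.mahlerMeasure_mul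
    (fun x y => (mahlerMeasure_linear x y).ge) (IsAlgClosed.splits (f.map (Int.castRingHom ℂ)))
  rw [natDegree_map_eq_of_injective hinj, eval_intCast_map] at key
  rw [mahlerMeasure_eq_mahlerMeasure_map, mahlerMeasure_eq_mahlerMeasure_map,
    moebiusTransform_map hinj]
  simpa using key

lemma norm_eval_sq_le_norm_content [IsUltrametricDist K] [IsAlgClosed K] [CharZero K]
    (h : MoebiusLocalBound 1 (a : K) b c d t) (f : ℤ[X]) :
    ‖((f.eval t : ℤ) : K)‖ ^ 2 ≤ ‖((moebiusTransform a b c d f).content : K)‖ := by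
  have hinj := RingHom.injective_int (Int.castRingHom K)
  have key := h.pow_mul_norm_eval_sq_le zero_le_one supNorm_mul_of_isUltrametricDist
    max_norm_le_supNorm_linear (IsAlgClosed.splits (f.map (Int.castRingHom K)))
  rw [one_pow, one_mul, eval_intCast_map] at key
  refine (key.trans ?_).trans (supNorm_map_intCast_le_norm_content _)
  rw [moebiusTransform_map hinj]
  refine mul_le_of_le_one_left (supNorm_nonneg _) ?_
  exact (supNorm_map_intCast_le_norm_content f).trans (IsUltrametricDist.norm_intCast_le_one K _)

lemma content_dvd_sq_eval
    (h : ∀ (l : ℕ) [Fact l.Prime], MoebiusLocalBound 1 (a : PadicAlgCl l) b c d t) (f : ℤ[X]) :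
    (moebiusTransform a b c d f).content ∣ f.eval t ^ 2 := by
  refine dvd_of_forall_padic_norm_le fun l _ => ?_
  have norm_intCast (n : ℤ) : ‖(n : PadicAlgCl l)‖ = ‖(n : ℚ_[l])‖ := by
    simpa using PadicAlgCl.norm_extends l (n : ℚ_[l])
  simpa only [← norm_intCast, Int.cast_pow, norm_pow] using (h l).norm_eval_sq_le_norm_content f

end MoebiusLocalBound

end LocalBound

section Height

open scoped IntermediateField

variable {α : ℂ}

lemma isPrimitive_intMinpoly (α : ℂ) : (intMinpoly α).IsPrimitive :=
  isPrimitive_primPart _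

lemma associated_map_intMinpoly (hα : IsAlgebraic ℚ α) :
    Associated ((intMinpoly α).map (Int.castRingHom ℚ)) (minpoly ℚ α) := by
  set N := IsLocalization.integerNormalization (nonZeroDivisors ℤ) (minpoly ℚ α) with hN
  obtain ⟨m, hm, hNm⟩ :=
    IsLocalization.integerNormalization_spec (nonZeroDivisors ℤ) (minpoly ℚ α)
  have hN0 : N ≠ 0 := by
    rw [hN, Ne, IsFractionRing.integerNormalization_eq_zero_iff]
    exact minpoly.ne_zero hα.isIntegral
  have associated_C_mul {r : ℤ} (hr : r ≠ 0) (g : ℚ[X]) : Associated (C (r : ℚ) * g) g :=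
    (associated_isUnit_mul_left_iff (isUnit_C.2 (Int.cast_ne_zero.2 hr).isUnit)).2 .rfl
  have hmap : N.map (Int.castRingHom ℚ) = C (m : ℚ) * minpoly ℚ α := by
    rw [← smul_eq_C_mul, Int.cast_smul_eq_zsmul]
    exact hNm
  have hcontent : N.map (Int.castRingHom ℚ) =
      C (N.content : ℚ) * (intMinpoly α).map (Int.castRingHom ℚ) := by
    conv_lhs => rw [N.eq_C_content_mul_primPart]
    rw [Polynomial.map_mul, map_C, eq_intCast, intMinpoly]
  calc Associated ((intMinpoly α).map (Int.castRingHom ℚ)) (N.map (Int.castRingHom ℚ)) :=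
        hcontent ▸ (associated_C_mul (mt content_eq_zero_iff.1 hN0) _).symm
    Associated _ (minpoly ℚ α) := hmap ▸ associated_C_mul (nonZeroDivisors.ne_zero hm) _

lemma natDegree_intMinpoly (hα : IsAlgebraic ℚ α) :
    (intMinpoly α).natDegree = (minpoly ℚ α).natDegree := by
  rw [← natDegree_map_eq_of_injective (RingHom.injective_int (Int.castRingHom ℚ))]
  exact natDegree_eq_of_degree_eq (degree_eq_degree_of_associated (associated_map_intMinpoly hα))

lemma intMinpoly_dvd_iff_aeval_eq_zero (hα : IsAlgebraic ℚ α) (g : ℤ[X]) :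
    intMinpoly α ∣ g ↔ aeval α g = 0 := by
  rw [IsPrimitive.Int.dvd_iff_map_cast_dvd_map_cast _ _ (isPrimitive_intMinpoly α),
    (associated_map_intMinpoly hα).dvd_iff_dvd_left, minpoly.dvd_iff]
  exact iff_of_eq (congrArg (· = 0) (aeval_map_algebraMap ℚ α g))

lemma eval_intMinpoly_ne_zero (hα : IsAlgebraic ℚ α) {t : ℤ} (ht : α ≠ t) :
    (intMinpoly α).eval t ≠ 0 := by
  intro h
  have hroot' : ((intMinpoly α).map (Int.castRingHom ℚ)).IsRoot t := by
    simpa [IsRoot, eval_intCast_map] using h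
  have hroot : (minpoly ℚ α).IsRoot t := hroot'.dvd (associated_map_intMinpoly hα).dvd
  refine ht ?_
  simpa using (minpoly.root hα.isIntegral hroot).symm

lemma mahlerMeasure_pos {f : ℤ[X]} (hf : f ≠ 0) : 0 < _root_.mahlerMeasure f := by
  rw [mahlerMeasure_eq_mahlerMeasure_map]
  exact Polynomial.mahlerMeasure_pos_of_ne_zero
    ((Polynomial.map_ne_zero_iff (RingHom.injective_int _)).2 hf)

lemma mahlerMeasure_eq_content_mul_of_aeval_eq_zero (hα : IsAlgebraic ℚ α) {g : ℤ[X]}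
    (hroot : aeval α g = 0) (hdeg : g.natDegree ≤ (minpoly ℚ α).natDegree) :
    _root_.mahlerMeasure g = g.content * _root_.mahlerMeasure (intMinpoly α) := by
  obtain ⟨k, rfl⟩ := (intMinpoly_dvd_iff_aeval_eq_zero hα g).2 hroot
  obtain ⟨u, rfl⟩ : ∃ u, k = C u := by
    rcases eq_or_ne k 0 with rfl | hk
    · exact ⟨0, C_0.symm⟩
    · rw [natDegree_mul (isPrimitive_intMinpoly α).ne_zero hk, natDegree_intMinpoly hα] at hdeg
      exact ⟨_, eq_C_of_natDegree_eq_zero (by omega)⟩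
  have hcontent : (intMinpoly α * C u).content = |u| := by
    rw [mul_comm, content_C_mul, (isPrimitive_intMinpoly α).content_eq_one, mul_one,
      Int.abs_eq_normalize]
  rw [hcontent, mul_comm, mahlerMeasure_eq_mahlerMeasure_map, mahlerMeasure_eq_mahlerMeasure_map,
    Polynomial.map_mul, Polynomial.mahlerMeasure_mul, map_C, Polynomial.mahlerMeasure_const,
    eq_intCast, Complex.norm_intCast, Int.cast_abs]

lemma isPrimitive_linear {R : Type*} [CommSemiring R] {x y : R} (h : IsCoprime x y) :
    (C y * X + C x).IsPrimitive := by
  intro r hr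
  rw [C_dvd_iff_dvd_coeff] at hr
  refine h.isUnit_of_dvd' ?_ ?_
  · simpa only [coeff_add, coeff_C_mul, coeff_X_zero, mul_zero, coeff_C_zero, zero_add] using hr 0
  · simpa only [coeff_add, coeff_C_mul, coeff_X_one, mul_one, coeff_C_succ, add_zero] using hr 1

/- The junk value `A / 0 = 0` agrees with `h(∞) = 0`, so `B = 0` is allowed. -/
lemma height_intCast_div_intCast {A B : ℤ} (h : IsCoprime A B) :
    height ((A : ℂ) / B) = Real.log (max |(A : ℝ)| |(B : ℝ)|) := by
  wlog hB : B ≠ 0 generalizing A B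
  · obtain rfl := not_not.1 hB
    have hA : |(A : ℝ)| = 1 := by
      exact_mod_cast Int.isUnit_iff_abs_eq.1 (isCoprime_zero_right.1 h)
    simpa [hA] using this (isCoprime_one_right : IsCoprime (0 : ℤ) 1) one_ne_zero
  have hcast : (A : ℂ) / B = algebraMap ℚ ℂ (A / B) := by simp
  have hdeg : (minpoly ℚ ((A : ℂ) / B)).natDegree = 1 := by
    rw [hcast, minpoly.eq_X_sub_C, natDegree_X_sub_C]
  have hroot : aeval ((A : ℂ) / B) (C B * X + C (-A)) = 0 := by
    have hB' : (B : ℂ) ≠ 0 := Int.cast_ne_zero.2 hB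
    simp [mul_div_cancel₀ _ hB']
  have hM := mahlerMeasure_eq_content_mul_of_aeval_eq_zero (hcast ▸ isAlgebraic_algebraMap _) hroot
    (natDegree_linear_le.trans_eq hdeg.symm)
  rw [(isPrimitive_linear h.neg_left).content_eq_one, Int.cast_one, one_mul,
    mahlerMeasure_eq_mahlerMeasure_map] at hM
  rw [Polynomial.map_add, Polynomial.map_mul, map_C, map_C, map_X, mahlerMeasure_linear] at hM
  rw [height, hdeg, ← hM]
  simp [max_comm]

lemma height_zero : height 0 = 0 := by
  simpa using height_intCast_div_intCast (isCoprime_one_right : IsCoprime (0 : ℤ) 1)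

lemma height_neg_one : height (-1) = 0 := by
  simpa using height_intCast_div_intCast (isCoprime_one_right : IsCoprime (-1 : ℤ) 1)

lemma natDegree_minpoly_le_of_mem_adjoin {K L : Type*} [Field K] [Field L] [Algebra K L] {x y : L}
    (hx : IsIntegral K x) (hy : y ∈ K⟮x⟯) :
    (minpoly K y).natDegree ≤ (minpoly K x).natDegree := by
  have := IntermediateField.adjoin.finiteDimensional hx
  rw [← IntermediateField.adjoin.finrank hx, ← IntermediateField.minpoly_eq (⟨y, hy⟩ : K⟮x⟯)]
  exact minpoly.natDegree_le _

variable {a b c d t : ℤ}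

lemma moebius_mem_adjoin (a b c d : ℤ) (α : ℂ) : (a * α + b) / (c * α + d) ∈ ℚ⟮α⟯ := by
  have hα := IntermediateField.mem_adjoin_simple_self ℚ α
  exact div_mem (add_mem (mul_mem (intCast_mem _ a) hα) (intCast_mem _ b))
    (add_mem (mul_mem (intCast_mem _ c) hα) (intCast_mem _ d))

lemma isAlgebraic_moebius (hα : IsAlgebraic ℚ α) (a b c d : ℤ) :
    IsAlgebraic ℚ ((a * α + b) / (c * α + d)) := by
  rw [← mem_algebraicClosure_iff] at hα ⊢
  exact IntermediateField.adjoin_simple_le_iff.2 hα (moebius_mem_adjoin a b c d α)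

lemma aeval_moebiusTransform_eq_zero {f : ℤ[X]} (hden : c * α + d ≠ 0)
    (hroot : aeval ((a * α + b) / (c * α + d)) f = 0) :
    aeval α (moebiusTransform a b c d f) = 0 := by
  have hinj : Function.Injective (algebraMap ℤ ℂ) := RingHom.injective_int _
  rw [aeval_def, eval₂_eq_eval_map] at hroot ⊢
  rw [moebiusTransform_map hinj]
  simp only [algebraMap_int_eq, eq_intCast] at hroot ⊢
  rw [eval_moebiusTransform _ _ _ _ _ hden, hroot, zero_mul]

lemma pow_natDegree_le_mahlerMeasure_mul {κ : ℝ} (hκ : 0 ≤ κ)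
    (harch : MoebiusLocalBound κ (a : ℂ) b c d t)
    (hpadic : ∀ (l : ℕ) [Fact l.Prime], MoebiusLocalBound 1 (a : PadicAlgCl l) b c d t)
    (hα : IsAlgebraic ℚ α) {f : ℤ[X]} (hft : f.eval t ≠ 0)
    (hdeg : f.natDegree ≤ (minpoly ℚ α).natDegree)
    (hroot : aeval α (moebiusTransform a b c d f) = 0) :
    κ ^ f.natDegree ≤ _root_.mahlerMeasure f * _root_.mahlerMeasure (intMinpoly α) := by
  have hft_sq : 0 < f.eval t ^ 2 := by positivity
  have hcontent : ((moebiusTransform a b c d f).content : ℝ) ≤ ((f.eval t : ℤ) : ℝ) ^ 2 := by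
    exact_mod_cast Int.le_of_dvd hft_sq (MoebiusLocalBound.content_dvd_sq_eval hpadic f)
  have hM_nonneg : 0 ≤ _root_.mahlerMeasure f * _root_.mahlerMeasure (intMinpoly α) := by
    simp only [mahlerMeasure_eq_mahlerMeasure_map]
    exact mul_nonneg (Polynomial.mahlerMeasure_nonneg _) (Polynomial.mahlerMeasure_nonneg _)
  refine le_of_mul_le_mul_right ?_ (by exact_mod_cast hft_sq : 0 < ((f.eval t : ℤ) : ℝ) ^ 2)
  calc κ ^ f.natDegree * ((f.eval t : ℤ) : ℝ) ^ 2
      ≤ _root_.mahlerMeasure f * _root_.mahlerMeasure (moebiusTransform a b c d f) :=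
        harch.pow_mul_sq_eval_le hκ f
    _ = _root_.mahlerMeasure f * _root_.mahlerMeasure (intMinpoly α) *
          (moebiusTransform a b c d f).content := by
        rw [mahlerMeasure_eq_content_mul_of_aeval_eq_zero hα hroot
          ((natDegree_moebiusTransform_le a b c d f).trans hdeg)]
        ring
    _ ≤ _ := mul_le_mul_of_nonneg_left hcontent hM_nonneg

lemma moebiusTransform_ne_zero {κ : ℝ} (hκ : 0 < κ)
    (harch : MoebiusLocalBound κ (a : ℂ) b c d t) {f : ℤ[X]} (hft : f.eval t ≠ 0) :
    moebiusTransform a b c d f ≠ 0 := by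
  intro h0
  have key := harch.pow_mul_sq_eval_le hκ.le f
  rw [h0, show _root_.mahlerMeasure 0 = 0 by simp [_root_.mahlerMeasure], mul_zero] at key
  have : 0 < κ ^ f.natDegree * ((f.eval t : ℤ) : ℝ) ^ 2 := by positivity
  exact key.not_gt this

theorem log_le_height_add_height_moebius {κ : ℝ} (hκ : 0 < κ)
    (harch : MoebiusLocalBound κ (a : ℂ) b c d t)
    (hpadic : ∀ (l : ℕ) [Fact l.Prime], MoebiusLocalBound 1 (a : PadicAlgCl l) b c d t)
    (hα : IsAlgebraic ℚ α) (hden : c * α + d ≠ 0) (ht : (a * α + b) / (c * α + d) ≠ t) :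
    Real.log κ ≤ height α + height ((a * α + b) / (c * α + d)) := by
  set γ := (a * α + b) / (c * α + d)
  have hγ : IsAlgebraic ℚ γ := isAlgebraic_moebius hα a b c d
  have hft : (intMinpoly γ).eval t ≠ 0 := eval_intMinpoly_ne_zero hγ ht
  have hroot : aeval α (moebiusTransform a b c d (intMinpoly γ)) = 0 :=
    aeval_moebiusTransform_eq_zero hden ((intMinpoly_dvd_iff_aeval_eq_zero hγ _).1 dvd_rfl)
  have hdeg : (minpoly ℚ α).natDegree = (minpoly ℚ γ).natDegree := by
    refine le_antisymm ?_
      (natDegree_minpoly_le_of_mem_adjoin hα.isIntegral (moebius_mem_adjoin a b c d α))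
    rw [← natDegree_intMinpoly hα, ← natDegree_intMinpoly hγ]
    exact (natDegree_le_of_dvd ((intMinpoly_dvd_iff_aeval_eq_zero hα _).2 hroot)
      (moebiusTransform_ne_zero hκ harch hft)).trans (natDegree_moebiusTransform_le a b c d _)
  have hn : 0 < ((minpoly ℚ γ).natDegree : ℝ) := by
    exact_mod_cast minpoly.natDegree_pos hγ.isIntegral
  have hM_pos (x : ℂ) : _root_.mahlerMeasure (intMinpoly x) ≠ 0 :=
    (mahlerMeasure_pos (isPrimitive_intMinpoly x).ne_zero).ne'
  have key : κ ^ (minpoly ℚ γ).natDegree ≤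
      _root_.mahlerMeasure (intMinpoly α) * _root_.mahlerMeasure (intMinpoly γ) := by
    rw [← natDegree_intMinpoly hγ, mul_comm]
    exact pow_natDegree_le_mahlerMeasure_mul hκ.le harch hpadic hα hft
      (by rw [natDegree_intMinpoly hγ, hdeg]) hroot
  rw [height, height, hdeg, ← add_div, le_div_iff₀ hn, mul_comm, ← Real.log_pow,
    ← Real.log_mul (hM_pos α) (hM_pos γ)]
  exact Real.log_le_log (by positivity) key

end Height

section Row3

lemma max_abs_add_abs_sub {G : Type*} [AddCommGroup G] [LinearOrder G] [IsOrderedAddMonoid G]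
    (x y : G) : max |x + y| |x - y| = |x| + |y| := by
  refine le_antisymm (max_le (abs_add_le x y) (abs_sub x y)) ?_
  grind

lemma abs_re_add_abs_le_max_norm (w : ℂ) (r : ℝ) : |w.re| + |r| ≤ max ‖w + r‖ ‖w - r‖ := by
  rw [← max_abs_add_abs_sub]
  refine max_le_max ?_ ?_
  · simpa using Complex.abs_re_le_norm (w + r)
  · simpa using Complex.abs_re_le_norm (w - r)

lemma max_abs_div_four_eq (p q : ℝ) :
    max (|p + 3 * q| / 4) (|p - q| / 4) = (|p + q| + 2 * |q|) / 4 := by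
  rw [max_div_div_right zero_le_four, ← abs_two, ← abs_mul, ← max_abs_add_abs_sub]
  ring_nf

lemma add_div_four_le_max_norm_mul_max_norm (u : ℂ) (s q : ℝ) :
    (|s| + 2 * |q|) / 4 ≤
      max ‖u + 1 / 2‖ ‖u - 1 / 2‖ * max ‖s * u + q + s / 2‖ ‖s * u + q - s / 2‖ := by
  have hu : |u.re| + 1 / 2 ≤ max ‖u + 1 / 2‖ ‖u - 1 / 2‖ := by
    simpa using abs_re_add_abs_le_max_norm u (1 / 2)
  have hv : |s * u.re + q| + |s| / 2 ≤ max ‖s * u + q + s / 2‖ ‖s * u + q - s / 2‖ := by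
    simpa [abs_div] using abs_re_add_abs_le_max_norm (s * u + q) (s / 2)
  have hq : |q| ≤ |s| * |u.re| + |s * u.re + q| := by
    rw [← abs_mul]
    simpa [add_comm] using abs_sub (s * u.re + q) (s * u.re)
  refine le_trans ?_ (mul_le_mul hu hv (by positivity) (by positivity))
  linarith [mul_nonneg (abs_nonneg u.re) (abs_nonneg (s * u.re + q))]

/- The coordinate `u = (z + 1) / (2 (z - 1))` moves the fixed point `1` to `∞`; in it the four
quantities compared become symmetric pairs `u ± 1 / 2` and `(s u + q) ± s / 2`, `s = p + q`. -/
lemma row3_moebiusLocalBound_complex (p q : ℝ) :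
    MoebiusLocalBound (max (|p + 3 * q| / 4) (|p - q| / 4)) (q : ℂ) p (p + 2 * q) (-q) 1 := by
  intro z
  rcases eq_or_ne z 1 with rfl | hz
  · simp
  have hz' : z - 1 ≠ 0 := sub_ne_zero.2 hz
  have hpos : 0 < ‖z - 1‖ := norm_pos_iff.2 hz'
  have key := add_div_four_le_max_norm_mul_max_norm ((z + 1) / (2 * (z - 1))) (p + q) q
  have hu_add : (z + 1) / (2 * (z - 1)) + 1 / 2 = z / (z - 1) := by field_simp; ring
  have hu_sub : (z + 1) / (2 * (z - 1)) - 1 / 2 = 1 / (z - 1) := by field_simp; ring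
  have hv_add : ((p + q : ℝ) : ℂ) * ((z + 1) / (2 * (z - 1))) + q + ((p + q : ℝ) : ℂ) / 2 =
      -(q - (p + 2 * q) * z) / (z - 1) := by push_cast; field_simp; ring
  have hv_sub : ((p + q : ℝ) : ℂ) * ((z + 1) / (2 * (z - 1))) + q - ((p + q : ℝ) : ℂ) / 2 =
      (p - -q * z) / (z - 1) := by push_cast; field_simp; ring
  rw [hu_add, hu_sub, hv_add, hv_sub] at key
  simp only [norm_div, norm_neg, norm_one, max_div_div_right hpos.le, div_mul_div_comm] at key
  rw [le_div_iff₀ (by positivity), ← sq] at key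
  rwa [max_abs_div_four_eq, norm_sub_rev, max_comm 1]

variable {p q : ℤ}

/- Since `IsCoprime (p + q) (p + 2 * q)`, the square `(1 - z) ^ 2` is an integral combination of
`q - (p + 2 q) z` and `p + q z` with coefficients linear in `z`. -/
lemma row3_moebiusLocalBound_of_isUltrametricDist (K : Type*) [NormedField K]
    [IsUltrametricDist K] (hpq : IsCoprime p q) :
    MoebiusLocalBound 1 (q : K) p (p + 2 * q) (-q) 1 := by
  intro z
  obtain ⟨A, B, hAB⟩ : IsCoprime (p + q) (p + 2 * q) := by
    obtain ⟨a, b, h⟩ := hpq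
    exact ⟨2 * a - b, b - a, by linear_combination h⟩
  have hAB' : (A : K) * (p + q) + B * (p + 2 * q) = 1 := by
    exact_mod_cast congrArg (Int.cast : ℤ → K) hAB
  have norm_linear_le (m n : ℤ) : ‖(m : K) * z + n‖ ≤ max 1 ‖z‖ := by
    refine (IsUltrametricDist.norm_add_le_max _ _).trans (max_comm 1 ‖z‖ ▸ max_le_max ?_ ?_)
    · rw [norm_mul]
      exact mul_le_of_le_one_left (norm_nonneg _) (IsUltrametricDist.norm_intCast_le_one K m)
    · exact IsUltrametricDist.norm_intCast_le_one K n
  have bezout : (1 - z) ^ 2 =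
      ((-A - B : ℤ) * z + (A + 2 * B : ℤ)) * (q - (p + 2 * q) * z) +
        ((-A : ℤ) * z + (A + B : ℤ)) * (p - -q * z) := by
    push_cast
    linear_combination (-(1 - z) ^ 2) * hAB'
  rw [one_mul, ← norm_pow, bezout]
  refine (IsUltrametricDist.norm_add_le_max _ _).trans ?_
  rw [norm_mul, norm_mul, mul_max_of_nonneg _ _ (by positivity)]
  gcongr <;> exact norm_linear_le _ _

lemma max_abs_div_four_pos {q : ℝ} (hq : q ≠ 0) (p : ℝ) :
    0 < max (|p + 3 * q| / 4) (|p - q| / 4) := by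
  rw [max_abs_div_four_eq]
  positivity

lemma row3_apply_ne_one (hp : p ≠ -q) {α : ℂ} (hα : α ≠ 1)
    (hden : ((p : ℂ) + 2 * q) * α - q ≠ 0) :
    ((q : ℂ) * α + p) / ((p + 2 * q) * α - q) ≠ 1 := by
  rw [Ne, div_eq_one_iff_eq hden]
  intro h
  have hprod : ((p + q : ℤ) : ℂ) * (α - 1) = 0 := by
    push_cast
    linear_combination -h
  have hpq : p + q ≠ 0 := fun h => hp (eq_neg_of_add_eq_zero_left h)
  exact mul_ne_zero (Int.cast_ne_zero.2 hpq) (sub_ne_zero.2 hα) hprod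

lemma row3_log_le_height_add_height_of_denom_ne_zero (hpq : IsCoprime p q) (hq : q ≠ 0)
    (hp : p ≠ -q) {α : ℂ} (hα : IsAlgebraic ℚ α) (hα1 : α ≠ 1)
    (hden : ((p : ℂ) + 2 * q) * α - q ≠ 0) :
    Real.log (max (|(p : ℝ) + 3 * q| / 4) (|(p : ℝ) - q| / 4)) ≤
      height α + height (((q : ℂ) * α + p) / ((p + 2 * q) * α - q)) := by
  have hκ := max_abs_div_four_pos (Int.cast_ne_zero.2 hq : (q : ℝ) ≠ 0) p
  have harch := row3_moebiusLocalBound_complex p q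
  have hpadic (l : ℕ) [Fact l.Prime] :=
    row3_moebiusLocalBound_of_isUltrametricDist (PadicAlgCl l) hpq
  have key := log_le_height_add_height_moebius (a := q) (b := p) (c := p + 2 * q) (d := -q)
    (t := 1) hκ (by simpa using harch) (by simpa using @hpadic) hα
  simp only [Int.cast_add, Int.cast_mul, Int.cast_ofNat, Int.cast_neg, Int.cast_one,
    ← sub_eq_add_neg] at key
  exact key hden (row3_apply_ne_one hp hα1 hden)

lemma row3_log_le_height_of_denom_eq_zero (hpq : IsCoprime p q) (hq : q ≠ 0) {α : ℂ}
    (hα : ((p : ℂ) + 2 * q) * α - q = 0) :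
    Real.log (max (|(p : ℝ) + 3 * q| / 4) (|(p : ℝ) - q| / 4)) ≤ height α := by
  have hden : (p : ℂ) + 2 * q ≠ 0 := fun h => hq (by simpa [h] using hα)
  have hα' : α = (q : ℂ) / ((p + 2 * q : ℤ) : ℂ) := by
    push_cast
    rw [eq_div_iff hden, mul_comm]
    exact sub_eq_zero.1 hα
  have hcop : IsCoprime q (p + 2 * q) := hpq.symm.add_mul_right_right 2
  rw [hα', height_intCast_div_intCast hcop]
  refine Real.log_le_log (max_abs_div_four_pos (Int.cast_ne_zero.2 hq) p) ?_
  push_cast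
  grind

lemma row3_height_neg_one_add_height_eq (hpq : IsCoprime p q) (h4 : 4 ∣ p - q) :
    height (-1) + height (((q : ℂ) * -1 + p) / (((p : ℂ) + 2 * q) * -1 - q)) =
      Real.log (max (|(p : ℝ) + 3 * q| / 4) (|(p : ℝ) - q| / 4)) := by
  obtain ⟨m, hm⟩ := h4
  obtain rfl : p = 4 * m + q := by omega
  have hcop : IsCoprime (-m) (m + q) := by
    obtain ⟨a, b, h⟩ := hpq
    exact ⟨b - 3 * a, a + b, by linear_combination h⟩
  have himage : ((q : ℂ) * -1 + (4 * m + q : ℤ)) / (((4 * m + q : ℤ) + 2 * q) * -1 - q) =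
      ((-m : ℤ) : ℂ) / ((m + q : ℤ) : ℂ) := by
    rw [← mul_div_mul_left ((-m : ℤ) : ℂ) _ (by norm_num : (-4 : ℂ) ≠ 0)]
    push_cast
    congr 1 <;> ring
  have hadd : |((4 * m + q : ℤ) : ℝ) + 3 * q| / 4 = |((m + q : ℤ) : ℝ)| := by
    rw [← abs_of_pos (zero_lt_four' ℝ), ← abs_div]
    push_cast
    ring_nf
  have hsub : |((4 * m + q : ℤ) : ℝ) - q| / 4 = |((-m : ℤ) : ℝ)| := by
    rw [← abs_of_pos (zero_lt_four' ℝ), ← abs_div]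
    push_cast
    rw [abs_neg]
    ring_nf
  rw [height_neg_one, himage, height_intCast_div_intCast hcop, zero_add, hadd, hsub, max_comm]

end Row3

/-- Row 3 of Table 1: for `σ(z) = (qz + p)/((p + 2q)z - q)` (an involution fixing `1`)
with `p, q` coprime, `q > 0`, `p ≠ -q`: for every algebraic `α ≠ 1` one has
`h(α) + h(σ(α)) ≥ log max(|p + 3q|/4, |p - q|/4)`, with equality at `α = -1`
when `4 ∣ p - q`. -/
theorem table1_row3 (p q : ℤ) (hpq : IsCoprime p q) (hq : 0 < q) (hp : p ≠ -q) :
    (∀ α : ℂ, IsAlgebraic ℚ α → α ≠ 1 →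
      height α + height (((q : ℂ) * α + (p : ℂ)) / (((p : ℂ) + 2 * (q : ℂ)) * α - (q : ℂ)))
        ≥ Real.log (max ((|p + 3 * q| : ℝ) / 4) ((|p - q| : ℝ) / 4))) ∧
    (4 ∣ p - q →
      height (-1 : ℂ) +
          height (((q : ℂ) * (-1) + (p : ℂ)) / (((p : ℂ) + 2 * (q : ℂ)) * (-1) - (q : ℂ)))
        = Real.log (max ((|p + 3 * q| : ℝ) / 4) ((|p - q| : ℝ) / 4))) := by
  refine ⟨fun α hα hα1 => ?_, row3_height_neg_one_add_height_eq hpq⟩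
  rcases eq_or_ne (((p : ℂ) + 2 * q) * α - q) 0 with hden | hden
  · rw [hden, div_zero, height_zero, add_zero]
    exact row3_log_le_height_of_denom_eq_zero hpq hq.ne' hden
  · exact row3_log_le_height_add_height_of_denom_ne_zero hpq hq.ne' hp hα hα1 hden
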